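/- arXiv:2506.05528 — 6 statements merged into one kernel-verified Lean document; each statement's English description precedes it below -/
import Mathlib

section
/- Let n be a positive integer, let σ, π, ρ ∈ S_n and i ∈ {1,…,n−1} be such that σ = πρ and R(σ·s_i) = R(σ). Then there exists a unique factorization σ·s_i = π′ρ′ such that exactly one of the following holds: (1) π′ = π, ρ⁻¹ρ′ is a simple transposition, and R(ρ′) = R(ρ); or (2) ρ′ = ρ, π⁻¹π′ is a simple transposition, and R(π′) = R(π). -/
/-!
Indexing convention: positions of a permutation `σ ∈ S_n` are `0,…,n-1` (the element
`⟨i,_⟩ : Fin n` corresponds to the paper's 1-based position `i+1`).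
-/

/-- The recoil set of a permutation: the descent set of its inverse. -/
def recoilSet {n : ℕ} (σ : Equiv.Perm (Fin n)) : Finset (Fin n) :=
  Finset.univ.filter fun i => ∃ h : (i : ℕ) + 1 < n, σ⁻¹ ⟨(i : ℕ) + 1, h⟩ < σ⁻¹ i

/-- A simple transposition `s_j = (j, j+1)`. -/
def IsSimpleTransposition {n : ℕ} (τ : Equiv.Perm (Fin n)) : Prop :=
  ∃ (j : ℕ) (h : j + 1 < n), τ = Equiv.swap ⟨j, by omega⟩ ⟨j + 1, h⟩

/-!
Right multiplication by `s = (a b)`, with `a` and `b` consecutive, keeps the recoil set of `σ`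
exactly when `σ a` and `σ b` are not consecutive. Since `π ρ s = π (ρ a  ρ b) ρ`, only
`(π, ρ s)` and `(π (ρ a  ρ b), ρ)` can be the required factorization. The first one works exactly
when `ρ a` and `ρ b` are not consecutive; the second one exactly when they are, and then its recoil
condition says that `σ a` and `σ b` are not consecutive, which is the hypothesis on `σ`.

Being consecutive is adjacency in the Hasse diagram of the linear order `Fin n`, that is, in
`SimpleGraph.pathGraph n`.
-/

section

open Equiv SimpleGraph

theorem and_xor_distrib_left (p q r : Prop) : p ∧ Xor q r ↔ Xor (p ∧ q) (p ∧ r) := by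
  grind

theorem sym2_eq_of_swap_eq_swap {α : Type*} [DecidableEq α] {a b c d : α} (hab : a ≠ b)
    (heq : swap a b = swap c d) : s(a, b) = s(c, d) := by
  have hb : b = swap c d a := by rw [← heq, swap_apply_left]
  rw [Sym2.eq_iff]
  grind

theorem swap_lt_swap_iff_of_hasse_adj {α : Type*} [LinearOrder α] {a b x y : α}
    (hab : (hasse α).Adj a b) (hxy : s(x, y) ≠ s(a, b)) :
    swap a b x < swap a b y ↔ x < y := by
  wlog hcov : a ⋖ b generalizing a b
  · rw [swap_comm]
    exact this hab.symm (Sym2.eq_swap (a := a) ▸ hxy) (hab.resolve_left hcov)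
  have lt_left_iff_lt_right {z : α} (hz : z ≠ a) : z < a ↔ z < b := by
    rw [hcov.lt_iff_le_left, hz.le_iff_lt]
  have left_lt_iff_right_lt {z : α} (hz : z ≠ b) : a < z ↔ b < z := by
    rw [hcov.lt_iff_le_right, hz.symm.le_iff_lt]
  rw [Ne, Sym2.eq_iff] at hxy
  grind [hcov.lt]

variable {n : ℕ} {a b : Fin n}

theorem mem_recoilSet {σ : Perm (Fin n)} {k : Fin n} :
    k ∈ recoilSet σ ↔ ∃ l, k ⋖ l ∧ σ⁻¹ l < σ⁻¹ k := by
  simp only [recoilSet, Finset.mem_filter, Finset.mem_univ, true_and, Fin.covBy_iff,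
    Nat.covBy_iff_add_one_eq]
  constructor
  · rintro ⟨hk, hlt⟩
    exact ⟨⟨k + 1, hk⟩, rfl, hlt⟩
  · rintro ⟨⟨_, hl⟩, rfl, hlt⟩
    exact ⟨hl, hlt⟩

theorem apply_mem_recoilSet_iff_of_covBy {σ : Perm (Fin n)} (hσ : σ a ⋖ σ b) :
    σ a ∈ recoilSet σ ↔ b < a := by
  rw [mem_recoilSet]
  constructor
  · rintro ⟨l, hl, hlt⟩
    simpa [hl.unique_right hσ] using hlt
  · intro hba
    exact ⟨σ b, hσ, by simpa using hba⟩

theorem recoilSet_mul_swap_ne_of_adj (σ : Perm (Fin n)) (hσ : (pathGraph n).Adj (σ a) (σ b)) :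
    recoilSet (σ * swap a b) ≠ recoilSet σ := by
  wlog hcov : σ a ⋖ σ b generalizing a b
  · rw [swap_comm]
    exact this hσ.symm (hσ.resolve_left hcov)
  intro heq
  have mem_iff_lt : σ a ∈ recoilSet σ ↔ b < a := apply_mem_recoilSet_iff_of_covBy hcov
  have mem_iff_gt : σ a ∈ recoilSet (σ * swap a b) ↔ a < b := by
    simpa using apply_mem_recoilSet_iff_of_covBy (σ := σ * swap a b) (a := b) (b := a)
      (by simpa using hcov)
  have hne : a ≠ b := fun h => hcov.ne (congrArg σ h)
  rw [heq, mem_iff_lt] at mem_iff_gt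
  exact hne.lt_or_gt.elim (fun h => h.asymm (mem_iff_gt.mpr h)) fun h => h.asymm (mem_iff_gt.mp h)

theorem recoilSet_mul_swap_eq_of_not_adj (σ : Perm (Fin n)) (hab : (pathGraph n).Adj a b)
    (hσ : ¬ (pathGraph n).Adj (σ a) (σ b)) :
    recoilSet (σ * swap a b) = recoilSet σ := by
  ext k
  simp only [mem_recoilSet, mul_inv_rev, swap_inv, Perm.mul_apply]
  refine exists_congr fun l => and_congr_right fun hkl => swap_lt_swap_iff_of_hasse_adj hab ?_
  intro heq
  have hadj : (pathGraph n).Adj l k := Or.inr hkl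
  have hedge : s(l, k) = s(σ a, σ b) := by simpa using congrArg (Sym2.map σ) heq
  rw [← mem_edgeSet, hedge, mem_edgeSet] at hadj
  exact hσ hadj

theorem recoilSet_mul_swap_eq_iff (σ : Perm (Fin n)) (hab : (pathGraph n).Adj a b) :
    recoilSet (σ * swap a b) = recoilSet σ ↔ ¬ (pathGraph n).Adj (σ a) (σ b) :=
  ⟨fun heq hσ => recoilSet_mul_swap_ne_of_adj σ hσ heq, recoilSet_mul_swap_eq_of_not_adj σ hab⟩

theorem isSimpleTransposition_iff_exists_covBy {τ : Perm (Fin n)} :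
    IsSimpleTransposition τ ↔ ∃ a b : Fin n, a ⋖ b ∧ τ = swap a b := by
  simp only [Fin.covBy_iff, Nat.covBy_iff_add_one_eq]
  constructor
  · rintro ⟨j, hj, rfl⟩
    exact ⟨_, _, rfl, rfl⟩
  · rintro ⟨a, ⟨_, hb⟩, rfl, rfl⟩
    exact ⟨a, hb, rfl⟩

theorem isSimpleTransposition_swap_iff :
    IsSimpleTransposition (swap a b) ↔ (pathGraph n).Adj a b := by
  rw [isSimpleTransposition_iff_exists_covBy]
  constructor
  · rintro ⟨c, d, hcd, heq⟩
    have hedge : s(c, d) = s(a, b) := sym2_eq_of_swap_eq_swap hcd.ne heq.symm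
    rw [← mem_edgeSet, ← hedge, mem_edgeSet]
    exact Or.inl hcd
  · rintro (hab | hba)
    · exact ⟨a, b, hab, rfl⟩
    · exact ⟨b, a, hba, swap_comm a b⟩

variable (π ρ : Perm (Fin n)) (pr : Perm (Fin n) × Perm (Fin n))

theorem factorization_modifying_right_iff (hab : (pathGraph n).Adj a b) :
    (pr.1 * pr.2 = π * ρ * swap a b ∧
        pr.1 = π ∧ IsSimpleTransposition (ρ⁻¹ * pr.2) ∧ recoilSet pr.2 = recoilSet ρ) ↔
      pr = (π, ρ * swap a b) ∧ ¬ (pathGraph n).Adj (ρ a) (ρ b) := by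
  constructor
  · rintro ⟨hfac, hπ, -, hrec⟩
    have hρ : pr.2 = ρ * swap a b := by rwa [hπ, mul_assoc, mul_right_inj] at hfac
    rw [hρ, recoilSet_mul_swap_eq_iff ρ hab] at hrec
    exact ⟨Prod.ext hπ hρ, hrec⟩
  · rintro ⟨rfl, hadj⟩
    refine ⟨(mul_assoc _ _ _).symm, rfl, ?_, (recoilSet_mul_swap_eq_iff ρ hab).mpr hadj⟩
    rwa [inv_mul_cancel_left, isSimpleTransposition_swap_iff]

theorem factorization_modifying_left_iff (hσ : ¬ (pathGraph n).Adj ((π * ρ) a) ((π * ρ) b)) :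
    (pr.1 * pr.2 = π * ρ * swap a b ∧
        pr.2 = ρ ∧ IsSimpleTransposition (π⁻¹ * pr.1) ∧ recoilSet pr.1 = recoilSet π) ↔
      pr = (π * swap (ρ a) (ρ b), ρ) ∧ (pathGraph n).Adj (ρ a) (ρ b) := by
  rw [mul_assoc, mul_swap_eq_swap_mul, ← mul_assoc]
  constructor
  · rintro ⟨hfac, hρ, hsimple, -⟩
    have hπ : pr.1 = π * swap (ρ a) (ρ b) := by rwa [hρ, mul_left_inj] at hfac
    rw [hπ, inv_mul_cancel_left, isSimpleTransposition_swap_iff] at hsimple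
    exact ⟨Prod.ext hπ hρ, hsimple⟩
  · rintro ⟨rfl, hadj⟩
    refine ⟨rfl, rfl, ?_, (recoilSet_mul_swap_eq_iff π hadj).mpr hσ⟩
    rwa [inv_mul_cancel_left, isSimpleTransposition_swap_iff]

end

/-- If `σ = πρ` and `R(σ·s_i) = R(σ)` then there is a unique factorization `σ·s_i = π′ρ′`
for which exactly one of the two alternatives of Proposition 3 holds. -/
theorem statement1 (n : ℕ) (hn : 0 < n) (σ π ρ : Equiv.Perm (Fin n)) (i : ℕ) (hi : i + 1 < n)
    (hfac : σ = π * ρ)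
    (hrec : recoilSet (σ * Equiv.swap (⟨i, by omega⟩ : Fin n) ⟨i + 1, hi⟩) = recoilSet σ) :
    ∃! pr : Equiv.Perm (Fin n) × Equiv.Perm (Fin n),
      pr.1 * pr.2 = σ * Equiv.swap (⟨i, by omega⟩ : Fin n) ⟨i + 1, hi⟩ ∧
      Xor'
        (pr.1 = π ∧ IsSimpleTransposition (ρ⁻¹ * pr.2) ∧ recoilSet pr.2 = recoilSet ρ)
        (pr.2 = ρ ∧ IsSimpleTransposition (π⁻¹ * pr.1) ∧ recoilSet pr.1 = recoilSet π) := by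
  subst hfac
  have hadj : (SimpleGraph.pathGraph n).Adj ⟨i, by omega⟩ ⟨i + 1, hi⟩ :=
    SimpleGraph.pathGraph_adj.mpr (Or.inl rfl)
  rw [recoilSet_mul_swap_eq_iff _ hadj] at hrec
  change ∃! pr : _ × _, _ ∧ Xor _ _
  simp only [and_xor_distrib_left, factorization_modifying_right_iff π ρ _ hadj,
    factorization_modifying_left_iff π ρ _ hrec]
  by_cases hρ : (SimpleGraph.pathGraph n).Adj (ρ ⟨i, by omega⟩) (ρ ⟨i + 1, hi⟩)
  · refine ⟨(π * Equiv.swap (ρ ⟨i, by omega⟩) (ρ ⟨i + 1, hi⟩), ρ), ?_⟩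
    simp [hρ]
  · refine ⟨(π, ρ * Equiv.swap ⟨i, by omega⟩ ⟨i + 1, hi⟩), ?_⟩
    simp [hρ, xor_comm _ False]
end

section
/- Let n be a positive integer and let I, J ⊆ {1,…,n−1}. If σ, σ′ ∈ S_n satisfy R(σ) = R(σ′), then the number of pairs (π, ρ) ∈ S_n × S_n with πρ = σ, R(π) = I and R(ρ) = J equals the number of pairs (π, ρ) with πρ = σ′, R(π) = I and R(ρ) = J. -/
/-!
Exchanging the entries of `σ` at two neighbouring positions `x`, `y` keeps the recoil set as long as
`σ x` and `σ y` are not consecutive values.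

These exchanges connect any two permutations `σ`, `τ` with the same recoil set: bubble sorting
`τ⁻¹ * σ` only exchanges entries of `σ` that occur in the opposite order in `τ`, and such entries
cannot be consecutive values, since the recoil set records the relative order of those.

An exchange carries over to factorizations `σ = π * ρ`. If `ρ x` and `ρ y` are not consecutive, it
is performed on `ρ`; otherwise `ρ x` and `ρ y` are neighbouring positions of `π`, whose entries
`π (ρ x) = σ x` and `π (ρ y) = σ y` are not consecutive, and it is performed on `π`. In both cases
the recoil sets of the two factors survive, and repeating the exchange undoes it.
-/

open Equiv SimpleGraph

section LinearOrder

variable {α : Type*} [LinearOrder α]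

theorem swap_lt_swap_iff_of_covBy {x y u v : α} (hxy : x ⋖ y) (huv : ¬(u = x ∧ v = y))
    (hvu : ¬(u = y ∧ v = x)) : swap x y u < swap x y v ↔ u < v := by
  have hlt : x < y := hxy.lt
  have hu : u < y → u ≤ x := hxy.le_of_lt
  have hv : v < y → v ≤ x := hxy.le_of_lt
  simp only [swap_apply_def]
  grind

theorem swap_lt_swap_iff_of_hasse_adj_s2 {x y u v : α} (hxy : (hasse α).Adj x y)
    (huv : ¬(u = x ∧ v = y)) (hvu : ¬(u = y ∧ v = x)) : swap x y u < swap x y v ↔ u < v := by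
  rcases hxy with hxy | hyx
  · exact swap_lt_swap_iff_of_covBy hxy huv hvu
  · rw [swap_comm]
    exact swap_lt_swap_iff_of_covBy hyx hvu huv

theorem perm_eq_one_of_strictMono [WellFoundedLT α] {w : Perm α} (hw : StrictMono w) : w = 1 := by
  have h : hw.orderIsoOfSurjective w w.surjective = OrderIso.refl α := Subsingleton.elim _ _
  exact Equiv.ext fun a => DFunLike.congr_fun h a

theorem exists_covBy_apply_lt_of_ne_one [WellFoundedLT α] [LocallyFiniteOrder α] {w : Perm α}
    (hw : w ≠ 1) : ∃ x y, x ⋖ y ∧ w y < w x := by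
  contrapose! hw
  refine perm_eq_one_of_strictMono ((strictMono_iff_forall_covBy w).mpr fun x y hxy => ?_)
  exact (hw x y hxy).lt_of_ne (w.injective.ne hxy.ne)

theorem perm_bubbleSort_induction [Finite α] {P : Perm α → Prop} (one : P 1)
    (mul_swap : ∀ w x y, x ⋖ y → w y < w x → P (w * swap x y) → P w) (w : Perm α) : P w := by
  have := Fintype.ofFinite α
  let := Fintype.toLocallyFiniteOrder (α := α)
  have wf : WellFounded (InvImage (· < ·) fun w : Perm α => toLex (w : α → α)) :=
    InvImage.wf _ wellFounded_lt
  induction w using wf.induction with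
  | _ w ih =>
    by_cases hw : w = 1
    · exact hw ▸ one
    · obtain ⟨x, y, hxy, hlt⟩ := exists_covBy_apply_lt_of_ne_one hw
      exact mul_swap w x y hxy hlt (ih _ (Pi.lex_desc hxy.le hlt))

end LinearOrder

section RecoilSet

variable {n : ℕ} {σ τ : Perm (Fin n)} {x y : Fin n}

theorem mem_recoilSet_iff_exists_covBy {a : Fin n} :
    a ∈ recoilSet σ ↔ ∃ b, a ⋖ b ∧ σ⁻¹ b < σ⁻¹ a := by
  simp only [recoilSet, Finset.mem_filter_univ, Fin.covBy_iff, Nat.covBy_iff_add_one_eq]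
  constructor
  · rintro ⟨ha, hlt⟩
    exact ⟨_, rfl, hlt⟩
  · rintro ⟨⟨_, hb⟩, rfl, hlt⟩
    exact ⟨hb, hlt⟩

theorem recoilSet_eq_iff_forall_covBy :
    recoilSet σ = recoilSet τ ↔ ∀ a b, a ⋖ b → (σ⁻¹ b < σ⁻¹ a ↔ τ⁻¹ b < τ⁻¹ a) := by
  simp only [Finset.ext_iff, mem_recoilSet_iff_exists_covBy]
  refine forall_congr' fun a => ⟨fun h b hab => ?_, fun h => exists_congr fun b => ?_⟩
  · have unique_cover (c : Fin n) : a ⋖ c ↔ c = b :=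
      ⟨fun hac => hac.unique_right hab, fun hcb => hcb ▸ hab⟩
    simpa only [unique_cover, exists_eq_left] using h
  · exact and_congr_right (h b)

theorem recoilSet_mul_swap (hxy : (hasse (Fin n)).Adj x y)
    (hσ : ¬(hasse (Fin n)).Adj (σ x) (σ y)) : recoilSet (σ * swap x y) = recoilSet σ := by
  refine recoilSet_eq_iff_forall_covBy.mpr fun a b hab => ?_
  rw [mul_inv_rev, swap_inv, Perm.mul_apply, Perm.mul_apply]
  refine swap_lt_swap_iff_of_hasse_adj_s2 hxy ?_ ?_ <;> rintro ⟨rfl, rfl⟩ <;> apply hσ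
  · simpa using Or.inr hab
  · simpa using Or.inl hab

theorem not_hasse_adj_of_recoilSet_eq (h : recoilSet σ = recoilSet τ) (hxy : x < y)
    (hlt : τ⁻¹ (σ y) < τ⁻¹ (σ x)) : ¬(hasse (Fin n)).Adj (σ x) (σ y) := by
  rw [recoilSet_eq_iff_forall_covBy] at h
  rintro (hcov | hcov)
  · have : y < x := by simpa using (h _ _ hcov).mpr hlt
    exact this.asymm hxy
  · exact hlt.asymm ((h _ _ hcov).mp (by simpa using hxy))

theorem eq_of_recoilSet_eq_of_forall_mul_swap {γ : Type*} {f : Perm (Fin n) → γ}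
    (hf : ∀ σ x y, (hasse (Fin n)).Adj x y → ¬(hasse (Fin n)).Adj (σ x) (σ y) →
      f (σ * swap x y) = f σ)
    (h : recoilSet σ = recoilSet τ) : f σ = f τ := by
  suffices ∀ w, recoilSet (τ * w) = recoilSet τ → f (τ * w) = f τ by
    simpa only [mul_inv_cancel_left] using this (τ⁻¹ * σ) (by rwa [mul_inv_cancel_left])
  intro w
  induction w using perm_bubbleSort_induction with
  | one => simp only [mul_one, implies_true]
  | mul_swap w x y hxy hlt ih =>
    intro hw
    have hadj : (hasse (Fin n)).Adj x y := Or.inl hxy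
    have hnadj : ¬(hasse (Fin n)).Adj ((τ * w) x) ((τ * w) y) :=
      not_hasse_adj_of_recoilSet_eq hw hxy.lt
        (by simpa using hlt)
    rw [← mul_assoc, recoilSet_mul_swap hadj hnadj, hf _ x y hadj hnadj] at ih
    exact ih hw

end RecoilSet

section SwapFactor

variable {α : Type*} [DecidableEq α] (G : SimpleGraph α) [DecidableRel G.Adj] (x y : α)

/-- The lift of `σ ↦ σ * swap x y` to factorizations `σ = π * ρ`: it changes only the left factor
when `ρ` maps `x` and `y` to neighbours in `G`, and only the right factor otherwise. Recoil sets are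
respected for `G` the Hasse diagram of `Fin n`. -/
def swapFactor (p : Perm α × Perm α) : Perm α × Perm α :=
  if G.Adj (p.2 x) (p.2 y) then (p.1 * swap (p.2 x) (p.2 y), p.2) else (p.1, p.2 * swap x y)

theorem swapFactor_involutive : Function.Involutive (swapFactor G x y) := by
  rintro ⟨π, ρ⟩
  by_cases h : G.Adj (ρ x) (ρ y)
  · simp [swapFactor, h, mul_assoc]
  · simp [swapFactor, h, mul_assoc, G.adj_comm (ρ y)]

theorem swapFactor_fst_mul_snd (p : Perm α × Perm α) :
    (swapFactor G x y p).1 * (swapFactor G x y p).2 = p.1 * p.2 * swap x y := by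
  unfold swapFactor
  split_ifs
  · rw [mul_assoc, mul_assoc, mul_swap_eq_swap_mul p.2]
  · rw [mul_assoc]

end SwapFactor

section Factorizations

variable {n : ℕ}

theorem recoilSet_swapFactor [DecidableRel (hasse (Fin n)).Adj] {x y : Fin n}
    (hxy : (hasse (Fin n)).Adj x y) {p : Perm (Fin n) × Perm (Fin n)}
    (hp : ¬(hasse (Fin n)).Adj ((p.1 * p.2) x) ((p.1 * p.2) y)) :
    recoilSet (swapFactor (hasse (Fin n)) x y p).1 = recoilSet p.1 ∧
      recoilSet (swapFactor (hasse (Fin n)) x y p).2 = recoilSet p.2 := by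
  unfold swapFactor
  split_ifs with h
  · exact ⟨recoilSet_mul_swap h hp, rfl⟩
  · exact ⟨rfl, recoilSet_mul_swap hxy h⟩

/-- The factorizations `σ = π * ρ` with `R(π) = I` and `R(ρ) = J`, as pairs `(π, ρ)`. -/
def recoilFactorizations (I J : Finset (Fin n)) (σ : Perm (Fin n)) :
    Finset (Perm (Fin n) × Perm (Fin n)) :=
  {p | p.1 * p.2 = σ ∧ recoilSet p.1 = I ∧ recoilSet p.2 = J}

theorem card_recoilFactorizations_mul_swap (I J : Finset (Fin n)) (σ : Perm (Fin n)) (x y : Fin n)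
    (hxy : (hasse (Fin n)).Adj x y) (hσ : ¬(hasse (Fin n)).Adj (σ x) (σ y)) :
    (recoilFactorizations I J (σ * swap x y)).card = (recoilFactorizations I J σ).card := by
  classical
  refine (Finset.card_equiv (swapFactor_involutive (hasse (Fin n)) x y).toPerm fun p => ?_).symm
  simp only [recoilFactorizations, Finset.mem_filter_univ, Function.Involutive.coe_toPerm,
    swapFactor_fst_mul_snd, mul_left_inj]
  refine and_congr_right fun hp => ?_
  obtain ⟨hfst, hsnd⟩ := recoilSet_swapFactor hxy (hp ▸ hσ)
  rw [hfst, hsnd]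

end Factorizations

/-- If `R(σ) = R(σ′)` then the number of factorizations `σ = πρ` with `R(π) = I` and
`R(ρ) = J` equals the corresponding number for `σ′`. -/
theorem statement2 (n : ℕ) (hn : 0 < n) (I J : Finset (Fin n)) (σ σ' : Equiv.Perm (Fin n))
    (h : recoilSet σ = recoilSet σ') :
    (Finset.univ.filter fun pr : Equiv.Perm (Fin n) × Equiv.Perm (Fin n) =>
        pr.1 * pr.2 = σ ∧ recoilSet pr.1 = I ∧ recoilSet pr.2 = J).card =
    (Finset.univ.filter fun pr : Equiv.Perm (Fin n) × Equiv.Perm (Fin n) =>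
        pr.1 * pr.2 = σ' ∧ recoilSet pr.1 = I ∧ recoilSet pr.2 = J).card :=
  eq_of_recoilSet_eq_of_forall_mul_swap (f := fun σ => (recoilFactorizations I J σ).card)
    (card_recoilFactorizations_mul_swap I J) h
end

section
/- Let n be a positive integer and I ⊆ {1,…,n−1}. Then the recoil class 𝒴_I = {σ ∈ S_n : R(σ) = I} has a minimum element α_I and a maximum element β_I for the right weak order, and 𝒴_I is the interval [α_I, β_I] = {σ ∈ S_n : α_I ≤_w σ ≤_w β_I}. -/
/-- The Coxeter length of a permutation: its number of inversions. -/
def invLength {n : ℕ} (σ : Equiv.Perm (Fin n)) : ℕ :=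
  (Finset.univ.filter fun p : Fin n × Fin n => p.1 < p.2 ∧ σ p.2 < σ p.1).card

/-- The right weak order: `π ≤_w σ` iff `ℓ(π) + ℓ(π⁻¹σ) = ℓ(σ)`. -/
def WeakLe {n : ℕ} (π σ : Equiv.Perm (Fin n)) : Prop :=
  invLength π + invLength (π⁻¹ * σ) = invLength σ

/-!
Record a permutation `σ` by its inverted pairs of values: the `a < b` with `σ⁻¹ b < σ⁻¹ a`. The
length of `π⁻¹ * σ` is the size of the symmetric difference of the two sets of inverted pairs, so
the right weak order is inclusion of these sets. A recoil of `σ` is an inverted pair of adjacent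
values, and transitivity along `a, a + 1, …, b` shows that, whenever `R(σ) = I`, the pair `(a, b)`
is inverted if `[a, b) ⊆ I` and is not inverted if `[a, b)` is disjoint from `I`. These two bounds
are attained: cut the values into maximal runs after each non-element (respectively element) of
`I`, reverse each run (respectively the order of the runs), and the result inverts exactly the
pairs with `[a, b) ⊆ I` (respectively those with `[a, b)` meeting `I`).
-/

open Finset Order OrderDual

section CountBelow

variable {ι : Type*} [LinearOrder ι] [LocallyFiniteOrderBot ι]

/-- The number of elements of `S` strictly below `a`. Seen as a function of `a`, it is the index of
the block of `a` when `ι` is cut after every element of `S`. -/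
def countBelow (S : Finset ι) (a : ι) : ℕ := #(Iio a ∩ S)

theorem countBelow_monotone (S : Finset ι) : Monotone (countBelow S) := fun _ _ hab =>
  card_le_card (inter_subset_inter_right (Iio_subset_Iio hab))

theorem countBelow_eq_iff_disjoint_Ico [LocallyFiniteOrder ι] {S : Finset ι} {a b : ι}
    (hab : a ≤ b) : countBelow S a = countBelow S b ↔ Disjoint (Ico a b) S := by
  have hsub : Iio a ∩ S ⊆ Iio b ∩ S := inter_subset_inter_right (Iio_subset_Iio hab)
  calc countBelow S a = countBelow S b
      ↔ Iio b ∩ S ⊆ Iio a ∩ S :=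
        ⟨fun h => (eq_of_subset_of_card_le hsub h.ge).ge,
          fun h => (card_le_card hsub).antisymm (card_le_card h)⟩
    _ ↔ Disjoint (Ico a b) S := by
        simp only [subset_iff, disjoint_left, mem_inter, mem_Iio, mem_Ico]
        grind

end CountBelow

theorem Ico_succ_of_not_isMax {ι : Type*} [LinearOrder ι] [LocallyFiniteOrder ι] [SuccOrder ι]
    {i : ι} (hi : ¬ IsMax i) : Ico i (succ i) = {i} := by
  rw [Ico_succ_right_eq_Icc_of_not_isMax hi, Icc_self]

theorem sort_inv_lt_sort_inv_iff {n : ℕ} {β : Type*} [LinearOrder β] {f : Fin n → β}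
    (hf : Function.Injective f) (a b : Fin n) :
    (Tuple.sort f)⁻¹ a < (Tuple.sort f)⁻¹ b ↔ f a < f b := by
  have hmono : StrictMono (f ∘ Tuple.sort f) :=
    (Tuple.monotone_sort f).strictMono_of_injective (hf.comp (Equiv.injective _))
  simp [← hmono.lt_iff_lt]

section Recoil

variable {n : ℕ} {π σ : Equiv.Perm (Fin n)} {I : Finset (Fin n)} {a b i : Fin n}

/-- The inversions of `σ` recorded as pairs of values `a < b` such that `b` stands to the
left of `a` in `σ`, rather than as pairs of positions. The right weak order is inclusion of these
sets. -/
def valueInversions (σ : Equiv.Perm (Fin n)) : Finset (Fin n × Fin n) :=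
  {p | p.1 < p.2 ∧ σ⁻¹ p.2 < σ⁻¹ p.1}

theorem mem_valueInversions : (a, b) ∈ valueInversions σ ↔ a < b ∧ σ⁻¹ b < σ⁻¹ a := by
  simp [valueInversions]

theorem valueInversions_one : valueInversions (1 : Equiv.Perm (Fin n)) = ∅ := by
  ext ⟨a, b⟩
  simpa [mem_valueInversions] using le_of_lt

theorem invLength_inv_mul_eq_card_discordant (π σ : Equiv.Perm (Fin n)) :
    invLength (π⁻¹ * σ) =
      #{p : Fin n × Fin n | σ⁻¹ p.1 < σ⁻¹ p.2 ∧ π⁻¹ p.2 < π⁻¹ p.1} :=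
  card_equiv (σ.prodCongr σ) fun _ => by
    rw [mem_filter_univ, mem_filter_univ]
    simp

theorem invLength_inv_mul (π σ : Equiv.Perm (Fin n)) :
    invLength (π⁻¹ * σ) =
      #(valueInversions π \ valueInversions σ) + #(valueInversions σ \ valueInversions π) := by
  rw [invLength_inv_mul_eq_card_discordant, ← card_filter_add_card_filter_not (fun p => p.1 < p.2)]
  -- Discordant pairs with `a < b` are inverted by `π` only; the others, once swapped, by `σ` only.
  congr 1
  · congr 1
    ext ⟨a, b⟩
    simp only [mem_filter, mem_univ, true_and, mem_sdiff, mem_valueInversions]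
    have hne : a ≠ b → σ⁻¹ a ≠ σ⁻¹ b := σ⁻¹.injective.ne
    grind
  · refine card_equiv (Equiv.prodComm _ _) fun ⟨a, b⟩ => ?_
    simp only [mem_filter, mem_univ, true_and, mem_sdiff, Equiv.prodComm_apply,
      Prod.swap_prod_mk, mem_valueInversions]
    have hne : a ≠ b → π⁻¹ a ≠ π⁻¹ b := π⁻¹.injective.ne
    grind

theorem invLength_eq_card_valueInversions (σ : Equiv.Perm (Fin n)) :
    invLength σ = #(valueInversions σ) := by
  simpa [valueInversions_one] using invLength_inv_mul 1 σ

theorem weakLe_iff_valueInversions_subset :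
    WeakLe π σ ↔ valueInversions π ⊆ valueInversions σ := by
  have hπ := card_sdiff_add_card_inter (valueInversions π) (valueInversions σ)
  have hσ := card_sdiff_add_card_inter (valueInversions σ) (valueInversions π)
  rw [inter_comm] at hσ
  rw [WeakLe, invLength_inv_mul, invLength_eq_card_valueInversions,
    invLength_eq_card_valueInversions, ← sdiff_eq_empty_iff_subset, ← card_eq_zero]
  lia

theorem weakLe_iff_forall_lt :
    WeakLe π σ ↔ ∀ a b, a < b → π⁻¹ b < π⁻¹ a → σ⁻¹ b < σ⁻¹ a := by
  rw [weakLe_iff_valueInversions_subset]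
  simp +contextual [subset_iff, mem_valueInversions]

theorem not_isMax_iff_val_add_one_lt : ¬ IsMax i ↔ (i : ℕ) + 1 < n := by
  obtain _ | n := n
  · exact i.elim0
  · rw [isMax_iff_eq_top, Fin.ext_iff, Fin.val_top]
    lia

theorem order_succ_eq_mk (h : (i : ℕ) + 1 < n) : succ i = ⟨i + 1, h⟩ :=
  CovBy.succ_eq (Fin.covBy_iff.2 (covBy_add_one _))

-- If `i` is the largest value, then `succ i = i` and both sides are false.
theorem mem_recoilSet_s4 : i ∈ recoilSet σ ↔ σ⁻¹ (succ i) < σ⁻¹ i := by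
  by_cases h : (i : ℕ) + 1 < n
  · simp [recoilSet, h, order_succ_eq_mk h]
  · have hmax : IsMax i := not_not.1 (not_isMax_iff_val_add_one_lt.not.2 h)
    simp [recoilSet, h, hmax.succ_eq]

theorem not_isMax_of_mem_recoilSet (hi : i ∈ recoilSet σ) : ¬ IsMax i := fun hmax => by
  simp [mem_recoilSet_s4, hmax.succ_eq] at hi

theorem WeakLe.recoilSet_subset (h : WeakLe π σ) : recoilSet π ⊆ recoilSet σ := fun i hi =>
  mem_recoilSet_s4.2 <| weakLe_iff_forall_lt.1 h i (succ i)
    (lt_succ_of_not_isMax (not_isMax_of_mem_recoilSet hi)) (mem_recoilSet_s4.1 hi)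

theorem inv_lt_inv_of_Ico_subset_recoilSet (hab : a < b) (h : Ico a b ⊆ recoilSet σ) :
    σ⁻¹ b < σ⁻¹ a := by
  have hanti : StrictAntiOn (⇑σ⁻¹) (Set.Icc a b) :=
    strictAntiOn_of_succ_lt Set.ordConnected_Icc fun i hmax hi hsucc =>
      mem_recoilSet_s4.1 <| h <| mem_Ico.2 ⟨hi.1, (lt_succ_of_not_isMax hmax).trans_le hsucc.2⟩
  exact hanti (Set.left_mem_Icc.2 hab.le) (Set.right_mem_Icc.2 hab.le) hab

theorem inv_le_inv_of_disjoint_Ico_recoilSet (hab : a ≤ b) (h : Disjoint (Ico a b) (recoilSet σ)) :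
    σ⁻¹ a ≤ σ⁻¹ b := by
  have hmono : MonotoneOn (⇑σ⁻¹) (Set.Icc a b) :=
    monotoneOn_of_le_succ Set.ordConnected_Icc fun i hmax hi hsucc =>
      not_lt.1 <| mem_recoilSet_s4.not.1 <| disjoint_left.1 h <|
        mem_Ico.2 ⟨hi.1, (lt_succ_of_not_isMax hmax).trans_le hsucc.2⟩
  exact hmono (Set.left_mem_Icc.2 hab) (Set.right_mem_Icc.2 hab) hab

/-- The minimum `α_I` of the recoil class of `I`: the permutation listing, from left to right, the
blocks of values obtained by cutting after each element outside `I`, each block in decreasing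
order. -/
def recoilMin (I : Finset (Fin n)) : Equiv.Perm (Fin n) :=
  Tuple.sort fun a => toLex (countBelow Iᶜ a, toDual a)

/-- The maximum `β_I` of the recoil class of `I`: the permutation listing, from the last to the
first, the blocks of values obtained by cutting after each element of `I`, each block in increasing
order. -/
def recoilMax (I : Finset (Fin n)) : Equiv.Perm (Fin n) :=
  Tuple.sort fun a => toLex (toDual (countBelow I a), a)

theorem recoilMin_inv_lt_inv_iff (hab : a < b) :
    (recoilMin I)⁻¹ b < (recoilMin I)⁻¹ a ↔ Ico a b ⊆ I := by
  have hle : countBelow Iᶜ a ≤ countBelow Iᶜ b := countBelow_monotone _ hab.le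
  rw [recoilMin, sort_inv_lt_sort_inv_iff (fun _ _ h => congrArg (fun p => (ofLex p).2) h),
    ← disjoint_compl_right_iff, ← countBelow_eq_iff_disjoint_Ico hab.le]
  simp [Prod.Lex.toLex_lt_toLex, hab, hle.not_gt, eq_comm]

theorem recoilMax_inv_lt_inv_iff (hab : a < b) :
    (recoilMax I)⁻¹ b < (recoilMax I)⁻¹ a ↔ ¬ Disjoint (Ico a b) I := by
  have hle : countBelow I a ≤ countBelow I b := countBelow_monotone _ hab.le
  rw [recoilMax, sort_inv_lt_sort_inv_iff (fun _ _ h => congrArg (fun p => (ofLex p).2) h),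
    ← countBelow_eq_iff_disjoint_Ico hab.le]
  simp [Prod.Lex.toLex_lt_toLex, hab.not_gt, hle.lt_iff_ne]

theorem recoilSet_eq_of_forall_not_isMax (hI : ∀ i ∈ I, ¬ IsMax i)
    (h : ∀ i, ¬ IsMax i → (σ⁻¹ (succ i) < σ⁻¹ i ↔ i ∈ I)) : recoilSet σ = I := by
  ext i
  by_cases hmax : IsMax i
  · exact iff_of_false (fun hi => not_isMax_of_mem_recoilSet hi hmax) (fun hi => hI i hi hmax)
  · exact mem_recoilSet_s4.trans (h i hmax)

theorem recoilSet_recoilMin (hI : ∀ i ∈ I, ¬ IsMax i) : recoilSet (recoilMin I) = I :=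
  recoilSet_eq_of_forall_not_isMax hI fun i hi => by
    rw [recoilMin_inv_lt_inv_iff (lt_succ_of_not_isMax hi), Ico_succ_of_not_isMax hi,
      singleton_subset_iff]

theorem recoilSet_recoilMax (hI : ∀ i ∈ I, ¬ IsMax i) : recoilSet (recoilMax I) = I :=
  recoilSet_eq_of_forall_not_isMax hI fun i hi => by
    rw [recoilMax_inv_lt_inv_iff (lt_succ_of_not_isMax hi), Ico_succ_of_not_isMax hi,
      disjoint_singleton_left, not_not]

theorem recoilMin_recoilSet_weakLe (σ : Equiv.Perm (Fin n)) : WeakLe (recoilMin (recoilSet σ)) σ :=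
  weakLe_iff_forall_lt.2 fun _ _ hab hinv =>
    inv_lt_inv_of_Ico_subset_recoilSet hab ((recoilMin_inv_lt_inv_iff hab).1 hinv)

theorem weakLe_recoilMax_recoilSet (σ : Equiv.Perm (Fin n)) : WeakLe σ (recoilMax (recoilSet σ)) :=
  weakLe_iff_forall_lt.2 fun _ _ hab hinv => (recoilMax_inv_lt_inv_iff hab).2 fun hdisj =>
    hinv.not_ge (inv_le_inv_of_disjoint_Ico_recoilSet hab.le hdisj)

end Recoil

/-- Each recoil class has a minimum `α_I` and maximum `β_I` for the right weak order,
and is exactly the weak-order interval `[α_I, β_I]`. -/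
theorem statement4 (n : ℕ) (hn : 0 < n) (I : Finset (Fin n)) (hI : ∀ i ∈ I, (i : ℕ) + 1 < n) :
    ∃ α β : Equiv.Perm (Fin n), recoilSet α = I ∧ recoilSet β = I ∧
      ∀ σ : Equiv.Perm (Fin n), recoilSet σ = I ↔ (WeakLe α σ ∧ WeakLe σ β) := by
  have hmax : ∀ i ∈ I, ¬ IsMax i := fun i hi => not_isMax_iff_val_add_one_lt.2 (hI i hi)
  have hα : recoilSet (recoilMin I) = I := recoilSet_recoilMin hmax
  have hβ : recoilSet (recoilMax I) = I := recoilSet_recoilMax hmax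
  refine ⟨recoilMin I, recoilMax I, hα, hβ, fun σ => ⟨?_, ?_⟩⟩
  · rintro rfl
    exact ⟨recoilMin_recoilSet_weakLe σ, weakLe_recoilMax_recoilSet σ⟩
  · rintro ⟨hασ, hσβ⟩
    exact (hσβ.recoilSet_subset.trans hβ.le).antisymm (hα.ge.trans hασ.recoilSet_subset)
end

section
/- Let (W,S) be a Coxeter system with length function ℓ, let w ∈ W and s ∈ S be such that ℓ(ws) = ℓ(w) + 1. Then: (1) if wsw⁻¹ ∉ S, then R(ws) = R(w); (2) if wsw⁻¹ ∈ S, then R(ws) = R(w) ∪ {wsw⁻¹} and R(ws) ≠ R(w). -/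
open CoxeterSystem

/-- The recoil set of `w`: the set of simple reflections `s` with `ℓ(sw) = ℓ(w) − 1`. -/
def coxRecoil {B W : Type*} [Group W] {M : CoxeterMatrix B} (cs : CoxeterSystem M W)
    (w : W) : Set W :=
  {s | s ∈ Set.range cs.simple ∧ cs.length (s * w) + 1 = cs.length w}

/-!
Let `η(w, t) = (-1)ⁿ`, where `n` counts the occurrences of `t` in the left inversion sequence of a
word for `w`. The sign does not depend on the word: `w ↦ (η(w, ·), w)` is a homomorphism into the
semidirect product of the sign functions on `W` with `W`, acting by conjugation. It detects
inversions: `t` is a left inversion of `w` if and only if `η(w, t) = -1`. The cocycle identity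
`η(ws, t) = η(w, t) η(s, w⁻¹tw)` then says that right multiplication of `w` by `s` changes the set
of left inversions exactly at `wsw⁻¹`, and recoils are the simple left inversions.
-/

section SignedConj

variable {W : Type*} [Group W]

/-- The action of `W` on the sign functions `W → ℤˣ` induced by conjugation on `W`. -/
def conjSignAction (W : Type*) [Group W] : W →* MulAut (W → ℤˣ) :=
  (mulAutArrow (G := ConjAct W)).comp ConjAct.toConjAct.toMonoidHom

theorem conjSignAction_apply (w : W) (f : W → ℤˣ) (t : W) :
    conjSignAction W w f t = f (w⁻¹ * t * w) :=
  congrArg f (ConjAct.toConjAct_inv_smul w t)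

/-- The semidirect product of the sign functions on `W` with `W`, in which the pairs `(η(w, ·), w)`
multiply according to the cocycle identity for `η`. -/
abbrev SignedConj (W : Type*) [Group W] : Type _ := (W → ℤˣ) ⋊[conjSignAction W] W

end SignedConj

theorem prod_map_alternatingWord {B G : Type*} [Monoid G] (f : B → G) (i j : B) (m : ℕ) :
    ((alternatingWord i j (2 * m)).map f).prod = (f i * f j) ^ m := by
  induction m with
  | zero => simp [alternatingWord]
  | succ m ih =>
    rw [mul_add_one, alternatingWord_succ', alternatingWord_succ']
    simp [ih, pow_succ', mul_assoc]

section InversionSign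

variable {B W : Type*} [Group W] {M : CoxeterMatrix B} (cs : CoxeterSystem M W)

theorem leftInvSeq_alternatingWord (i j : B) (m : ℕ) :
    cs.leftInvSeq (alternatingWord i j (2 * m)) =
      (List.range (2 * m)).map fun k ↦ cs.simple i * (cs.simple j * cs.simple i) ^ k := by
  refine List.ext_getElem (by simp) fun k hk _ ↦ ?_
  rw [cs.length_leftInvSeq, length_alternatingWord] at hk
  rw [getElem_leftInvSeq_alternatingWord _ _ _ _ _ hk, prod_alternatingWord_eq_mul_pow]
  simp [Nat.mul_add_div]

open Classical in
theorem even_count_leftInvSeq_alternatingWord (i j : B) (t : W) :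
    Even ((cs.leftInvSeq (alternatingWord i j (2 * M i j))).count t) := by
  -- The `k`-th and `(M i j + k)`-th entries coincide, as `(s_j s_i) ^ M i j = 1`.
  rw [leftInvSeq_alternatingWord, two_mul, List.range_add, List.map_append, List.map_map]
  simp [Function.comp_def, pow_add, M.symmetric i j]

open Classical in
/-- The pair `(η(s, ·), s)` attached to a simple reflection `s`: the sign function of `s` is `-1`
at `s` and `1` elsewhere. -/
noncomputable def signedSimple (i : B) : SignedConj W :=
  ⟨Pi.mulSingle (cs.simple i) (-1), cs.simple i⟩

theorem prod_map_signedSimple_right (ω : List B) :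
    (ω.map (signedSimple cs)).prod.right = cs.wordProd ω := by
  induction ω with
  | nil => simp
  | cons i ω ih => simp [ih, signedSimple, cs.wordProd_cons]

open Classical in
theorem prod_map_signedSimple_left (ω : List B) (t : W) :
    (ω.map (signedSimple cs)).prod.left t = (-1) ^ (cs.leftInvSeq ω).count t := by
  induction ω generalizing t with
  | nil => simp
  | cons i ω ih =>
    have count_conj : ((cs.leftInvSeq ω).map (MulAut.conj (cs.simple i))).count t =
        (cs.leftInvSeq ω).count ((cs.simple i)⁻¹ * t * cs.simple i) := by
      rw [← List.count_map_of_injective (cs.leftInvSeq ω) _ (MulAut.conj (cs.simple i)).injective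
        ((cs.simple i)⁻¹ * t * cs.simple i)]
      simp [mul_assoc]
    rw [List.map_cons, List.prod_cons, SemidirectProduct.mul_left, Pi.mul_apply,
      conjSignAction_apply, ih, leftInvSeq, List.count_cons, count_conj, pow_add, mul_comm]
    by_cases h : t = cs.simple i <;> simp [signedSimple, h, Ne.symm]

theorem isLiftable_signedSimple : M.IsLiftable (signedSimple cs) := by
  intro i j
  rw [← prod_map_alternatingWord]
  ext t
  · rw [prod_map_signedSimple_left, (even_count_leftInvSeq_alternatingWord cs i j t).neg_one_pow]
    rfl
  · simp [prod_map_signedSimple_right, prod_alternatingWord_eq_mul_pow]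

/-- The homomorphism `w ↦ (η(w, ·), w)`. -/
noncomputable def signedConjHom : W →* SignedConj W :=
  cs.lift ⟨signedSimple cs, isLiftable_signedSimple cs⟩

/-- The sign `η(w, t)`: the parity of the number of occurrences of `t` in the left inversion
sequence of any word for `w`. -/
noncomputable def inversionSign (w t : W) : ℤˣ := (signedConjHom cs w).left t

theorem signedConjHom_wordProd (ω : List B) :
    signedConjHom cs (cs.wordProd ω) = (ω.map (signedSimple cs)).prod := by
  rw [CoxeterSystem.wordProd, map_list_prod, List.map_map]
  congr 2
  exact funext (cs.lift_apply_simple _)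

open Classical in
theorem inversionSign_wordProd (ω : List B) (t : W) :
    inversionSign cs (cs.wordProd ω) t = (-1) ^ (cs.leftInvSeq ω).count t := by
  rw [inversionSign, signedConjHom_wordProd, prod_map_signedSimple_left]

theorem signedConjHom_right (w : W) : (signedConjHom cs w).right = w := by
  obtain ⟨ω, rfl⟩ := cs.wordProd_surjective w
  rw [signedConjHom_wordProd, prod_map_signedSimple_right]

theorem inversionSign_one (t : W) : inversionSign cs 1 t = 1 := by
  simp [inversionSign]

theorem inversionSign_mul (u v t : W) :
    inversionSign cs (u * v) t = inversionSign cs u t * inversionSign cs v (u⁻¹ * t * u) := by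
  simp only [inversionSign, map_mul, SemidirectProduct.mul_left, Pi.mul_apply,
    conjSignAction_apply, signedConjHom_right]

theorem inversionSign_simple_eq_neg_one_iff (i : B) (t : W) :
    inversionSign cs (cs.simple i) t = -1 ↔ t = cs.simple i := by
  classical
  rw [← cs.wordProd_singleton, inversionSign_wordProd]
  by_cases h : t = cs.simple i <;> simp [h, eq_comm]

theorem inversionSign_self {t : W} (ht : cs.IsReflection t) : inversionSign cs t t = -1 := by
  obtain ⟨u, i, rfl⟩ := ht
  have conj_cancel : u⁻¹ * (u * cs.simple i * u⁻¹) * u = cs.simple i := by group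
  have sign_cancel : inversionSign cs u (u * cs.simple i * u⁻¹) *
      inversionSign cs u⁻¹ (cs.simple i) = 1 := by
    rw [← inversionSign_one cs (u * cs.simple i * u⁻¹), ← mul_inv_cancel u, inversionSign_mul,
      conj_cancel]
  have sign_simple : inversionSign cs (cs.simple i) (cs.simple i) = -1 :=
    (inversionSign_simple_eq_neg_one_iff cs i _).2 rfl
  rw [mul_assoc u, inversionSign_mul, ← mul_assoc u, conj_cancel, inversionSign_mul, sign_simple]
  simpa using sign_cancel

theorem isLeftInversion_of_inversionSign_eq_neg_one {w t : W} (h : inversionSign cs w t = -1) :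
    cs.IsLeftInversion w t := by
  classical
  obtain ⟨ω, hω, rfl⟩ := cs.exists_isReduced w
  refine cs.isLeftInversion_of_mem_leftInvSeq hω (List.count_pos_iff.1 (Nat.pos_of_ne_zero ?_))
  intro count_zero
  rw [inversionSign_wordProd, count_zero] at h
  exact absurd h (by decide)

theorem isLeftInversion_iff_inversionSign_eq_neg_one {w t : W} :
    cs.IsLeftInversion w t ↔ inversionSign cs w t = -1 := by
  refine ⟨fun h ↦ ?_, isLeftInversion_of_inversionSign_eq_neg_one cs⟩
  -- Otherwise `η(tw, t) = -η(w, t) = -1`, making `t` a left inversion of both `w` and `tw`.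
  refine (Int.units_eq_one_or _).resolve_left fun sign_one ↦ ?_
  have sign_mul : inversionSign cs (t * w) t = -1 := by
    simp [inversionSign_mul, inversionSign_self cs h.1, sign_one]
  exact h.1.isLeftInversion_mul_right_iff.1
    (isLeftInversion_of_inversionSign_eq_neg_one cs sign_mul) h

theorem isLeftInversion_mul_simple_iff_xor {w t : W} {i : B} :
    cs.IsLeftInversion (w * cs.simple i) t ↔
      Xor (cs.IsLeftInversion w t) (t = w * cs.simple i * w⁻¹) := by
  have conj_eq_iff : w⁻¹ * t * w = cs.simple i ↔ t = w * cs.simple i * w⁻¹ := by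
    rw [eq_mul_inv_iff_mul_eq, mul_assoc, inv_mul_eq_iff_eq_mul]
  rw [isLeftInversion_iff_inversionSign_eq_neg_one, isLeftInversion_iff_inversionSign_eq_neg_one,
    inversionSign_mul, ← conj_eq_iff, ← inversionSign_simple_eq_neg_one_iff]
  generalize inversionSign cs w t = a, inversionSign cs (cs.simple i) (w⁻¹ * t * w) = b
  revert a b
  decide

theorem mem_coxRecoil_iff {w t : W} :
    t ∈ coxRecoil cs w ↔ t ∈ Set.range cs.simple ∧ cs.IsLeftInversion w t := by
  refine and_congr_right ?_
  rintro ⟨i, rfl⟩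
  rw [isLeftInversion_simple_iff_isLeftDescent, isLeftDescent_iff]

theorem not_isLeftInversion_conj_simple {w : W} {i : B}
    (h : cs.length (w * cs.simple i) = cs.length w + 1) :
    ¬cs.IsLeftInversion w (w * cs.simple i * w⁻¹) := by
  rintro ⟨-, hlt⟩
  rw [inv_mul_cancel_right, h] at hlt
  lia

theorem coxRecoil_mul_simple {w : W} {i : B}
    (h : cs.length (w * cs.simple i) = cs.length w + 1) :
    coxRecoil cs (w * cs.simple i) =
      coxRecoil cs w ∪ {w * cs.simple i * w⁻¹} ∩ Set.range cs.simple := by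
  ext t
  have not_both : ¬(cs.IsLeftInversion w t ∧ t = w * cs.simple i * w⁻¹) := by
    rintro ⟨ht, rfl⟩
    exact not_isLeftInversion_conj_simple cs h ht
  simp only [Set.mem_union, Set.mem_inter_iff, Set.mem_singleton_iff, mem_coxRecoil_iff,
    isLeftInversion_mul_simple_iff_xor, xor_iff_or_and_not_and]
  tauto

end InversionSign

/-- If `ℓ(ws) = ℓ(w) + 1` then `R(ws) = R(w)` when `wsw⁻¹ ∉ S`, and
`R(ws) = R(w) ∪ {wsw⁻¹} ≠ R(w)` when `wsw⁻¹ ∈ S`. -/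
theorem statement8 {B W : Type*} [Group W] {M : CoxeterMatrix B} (cs : CoxeterSystem M W)
    (w s : W) (hs : s ∈ Set.range cs.simple)
    (h : cs.length (w * s) = cs.length w + 1) :
    (w * s * w⁻¹ ∉ Set.range cs.simple → coxRecoil cs (w * s) = coxRecoil cs w) ∧
    (w * s * w⁻¹ ∈ Set.range cs.simple →
      coxRecoil cs (w * s) = coxRecoil cs w ∪ {w * s * w⁻¹} ∧
      coxRecoil cs (w * s) ≠ coxRecoil cs w) := by
  obtain ⟨i, rfl⟩ := hs
  rw [coxRecoil_mul_simple cs h]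
  refine ⟨fun conj_notMem ↦ ?_, fun conj_mem ↦ ?_⟩
  · rw [Set.singleton_inter_eq_empty.2 conj_notMem, Set.union_empty]
  · rw [Set.inter_eq_left.2 (Set.singleton_subset_iff.2 conj_mem)]
    refine ⟨rfl, fun union_eq ↦ not_isLeftInversion_conj_simple cs h ?_⟩
    exact ((mem_coxRecoil_iff cs).1 (Set.singleton_subset_iff.1 (Set.union_eq_left.1 union_eq))).2
end

section
/- Let (W,S) be a Coxeter system with W finite, and let I, J ⊆ S. If w, w′ ∈ W satisfy R(w) = R(w′), then the number of pairs (u,v) ∈ W × W with uv = w, R(u) = I and R(v) = J equals the number of pairs (u,v) with uv = w′, R(u) = I and R(v) = J. Consequently, setting Y_I = Σ_{w : R(w)=I} w in ℚ[W], there exist nonnegative integers a_{IJK} (K ⊆ S) such that Y_I · Y_J = Σ_K a_{IJK} Y_K. -/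
open scoped Classical in
/-- `Y_I`: the sum, in `ℚ[W]`, of all elements with recoil set `I`. -/
noncomputable def coxY {B W : Type*} [Group W] [Fintype W] {M : CoxeterMatrix B}
    (cs : CoxeterSystem M W) (I : Set W) : MonoidAlgebra ℚ W :=
  ∑ w : W, if coxRecoil cs w = I then MonoidAlgebra.of ℚ W w else 0

/-!
For a reflection `t` let `N(w, t) ∈ ℤ/2` record whether `ℓ(tw) < ℓ(w)`. The group acts on
`W × ℤ/2` by `w⁻¹ • (t, e) = (w⁻¹tw, e + N(w, t))`, so that
`N(xz, t) = N(x, t) + N(z, x⁻¹tx)`. Two consequences drive the argument.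

* Right multiplication of `v` by a simple `s` changes `R(v)` exactly when `vsv⁻¹` is simple.
  Hence, if `R(ws) = R(w)`, sending `(u, v)` to `(u, vs)` when `R(vs) = R(v)`, and to
  `(u · vsv⁻¹, v)` otherwise, is a bijection from the factorizations of `w` to those of `ws`
  preserving both recoil sets.
* The elements with a given recoil set are connected by such right multiplications: walking down
  in length, each of them reaches a product of a reduced word in the letters `I = R(w)`, and such a
  product is a prefix of every element whose recoil set contains `I`, hence unique.
-/

namespace SolomonDescent

open CoxeterSystem Relation

variable {B W : Type*} [Group W] {M : CoxeterMatrix B} (cs : CoxeterSystem M W)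

section InversionCocycle

open scoped Classical in
/-- The action of a simple reflection `s` on pairs (group element, sign), with signs written
additively: conjugation by `s` on the first component, with a change of sign exactly at `s`. It is
the value at a generator of `signedConj`. -/
noncomputable def signedConjSimple (i : B) : Equiv.Perm (W × ZMod 2) :=
  Function.Involutive.toPerm
    (fun p => (cs.simple i * p.1 * cs.simple i, p.2 + if p.1 = cs.simple i then 1 else 0)) <| by
    rintro ⟨t, e⟩
    have conj_eq_simple_iff : cs.simple i * t * cs.simple i = cs.simple i ↔ t = cs.simple i := by
      rw [mul_eq_right, mul_eq_one_iff_inv_eq, inv_simple, eq_comm]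
    ext
    · simp [mul_assoc]
    · simp only [conj_eq_simple_iff, add_assoc, CharTwo.add_self_eq_zero, add_zero]

open scoped Classical in
theorem signedConjSimple_apply (i : B) (t : W) (e : ZMod 2) :
    signedConjSimple cs i (t, e) =
      (cs.simple i * t * cs.simple i, e + if t = cs.simple i then 1 else 0) :=
  rfl

open scoped Classical in
theorem prod_map_reverse_signedConjSimple_apply (ω : List B) (t : W) (e : ZMod 2) :
    (ω.reverse.map (signedConjSimple cs)).prod (t, e) =
      ((cs.wordProd ω)⁻¹ * t * cs.wordProd ω, e + (cs.leftInvSeq ω).count t) := by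
  induction ω generalizing t e with
  | nil => simp
  | cons i ω ih =>
    have count_conj : (cs.leftInvSeq ω).count (cs.simple i * t * cs.simple i) =
        ((cs.leftInvSeq ω).map (MulAut.conj (cs.simple i))).count t := by
      rw [← List.count_map_of_injective _ _ (MulAut.conj (cs.simple i)).injective]
      simp [mul_assoc]
    rw [List.reverse_cons, List.map_append, List.prod_append, Equiv.Perm.mul_apply,
      List.map_singleton, List.prod_singleton, signedConjSimple_apply, ih, count_conj]
    ext
    · simp [wordProd_cons, mul_assoc]
    · simp [leftInvSeq, List.count_cons, eq_comm (a := t), add_assoc, add_comm]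

theorem prod_map_reverse_alternatingWord {G : Type*} [Monoid G] (f : B → G) (i j : B) (m : ℕ) :
    ((alternatingWord j i (2 * m)).reverse.map f).prod = (f i * f j) ^ m := by
  induction m with
  | zero => simp [alternatingWord]
  | succ m ih =>
    rw [Nat.mul_succ, alternatingWord_succ, alternatingWord_succ]
    simp only [List.concat_eq_append, List.reverse_append, List.reverse_singleton,
      List.singleton_append, List.map_cons, List.prod_cons, ih, pow_succ', mul_assoc]

theorem leftInvSeq_alternatingWord (i j : B) (m : ℕ) :
    cs.leftInvSeq (alternatingWord i j (2 * m)) =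
      (List.range (2 * m)).map fun k => cs.simple i * (cs.simple j * cs.simple i) ^ k := by
  refine List.ext_getElem (by simp) fun k hk _ => ?_
  rw [cs.getElem_leftInvSeq_alternatingWord i j m k (by simpa using hk),
    prod_alternatingWord_eq_mul_pow]
  simp [show (2 * k + 1) / 2 = k by lia]

theorem exists_leftInvSeq_alternatingWord_eq_append_self (i j : B) :
    ∃ L, cs.leftInvSeq (alternatingWord i j (2 * M i j)) = L ++ L := by
  refine ⟨(List.range (M i j)).map fun k => cs.simple i * (cs.simple j * cs.simple i) ^ k, ?_⟩
  rw [leftInvSeq_alternatingWord, two_mul, List.range_add, List.map_append, List.map_map]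
  simp [Function.comp_def, pow_add, M.symmetric i j]

theorem isLiftable_signedConjSimple : M.IsLiftable (signedConjSimple cs) := by
  classical
  intro i j
  ext1 ⟨t, e⟩
  obtain ⟨L, hL⟩ := exists_leftInvSeq_alternatingWord_eq_append_self cs j i
  rw [M.symmetric] at hL
  rw [← prod_map_reverse_alternatingWord, prod_map_reverse_signedConjSimple_apply, hL]
  have wordProd_eq_one : cs.wordProd (alternatingWord j i (2 * M i j)) = 1 := by
    rw [prod_alternatingWord_eq_mul_pow]
    simp
  simp [wordProd_eq_one, CharTwo.add_self_eq_zero]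

/-- The action of `W` on pairs (group element, sign) by conjugation, where the sign of a reflection
`t` changes under `w` exactly when `t` is a left inversion of `w⁻¹`
(see `signedConj_inv_apply`). -/
noncomputable def signedConj : W →* Equiv.Perm (W × ZMod 2) :=
  cs.lift ⟨signedConjSimple cs, isLiftable_signedConjSimple cs⟩

theorem signedConj_simple (i : B) : signedConj cs (cs.simple i) = signedConjSimple cs i :=
  cs.lift_apply_simple _ i

open scoped Classical in
theorem signedConj_wordProd_inv_apply (ω : List B) (t : W) (e : ZMod 2) :
    signedConj cs (cs.wordProd ω)⁻¹ (t, e) =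
      ((cs.wordProd ω)⁻¹ * t * cs.wordProd ω, e + (cs.leftInvSeq ω).count t) := by
  have map_wordProd : signedConj cs (cs.wordProd ω.reverse) =
      (ω.reverse.map (signedConjSimple cs)).prod := by
    simp [wordProd, map_list_prod, Function.comp_def, signedConj_simple]
  rw [← prod_map_reverse_signedConjSimple_apply, ← map_wordProd, wordProd_reverse]

theorem signedConj_apply_self {t : W} (ht : cs.IsReflection t) (e : ZMod 2) :
    signedConj cs t (t, e) = (t, e + 1) := by
  classical
  obtain ⟨u, i, rfl⟩ := ht
  obtain ⟨ω, rfl⟩ := cs.wordProd_surjective u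
  set t := cs.wordProd ω * cs.simple i * (cs.wordProd ω)⁻¹ with ht
  obtain ⟨c, hc⟩ : ∃ c : ZMod 2, ∀ e,
      signedConj cs (cs.wordProd ω)⁻¹ (t, e) = (cs.simple i, e + c) :=
    ⟨_, fun e => by
      rw [signedConj_wordProd_inv_apply, show (cs.wordProd ω)⁻¹ * t * cs.wordProd ω = cs.simple i by
        simp [ht, mul_assoc]]⟩
  have apply_simple : signedConj cs (cs.wordProd ω) (cs.simple i, e + 1 + c) = (t, e + 1) := by
    rw [← hc, ← Equiv.Perm.mul_apply, ← map_mul, mul_inv_cancel, map_one, Equiv.Perm.one_apply]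
  calc signedConj cs t (t, e)
      = signedConj cs (cs.wordProd ω) (signedConjSimple cs i (cs.simple i, e + c)) := by
        rw [← hc, ← signedConj_simple, ht, map_mul, map_mul, Equiv.Perm.mul_apply,
          Equiv.Perm.mul_apply]
    _ = (t, e + 1) := by
        rw [← apply_simple, signedConjSimple_apply]
        simp [add_right_comm]

theorem mem_leftInvSeq_or_mem_leftInvSeq {t : W} (ht : cs.IsReflection t) {ω ω' : List B}
    (h : cs.wordProd ω' = t * cs.wordProd ω) : t ∈ cs.leftInvSeq ω ∨ t ∈ cs.leftInvSeq ω' := by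
  classical
  by_contra! hmem
  have sign_eq : signedConj cs (cs.wordProd ω')⁻¹ (t, 0) =
      signedConj cs (cs.wordProd ω)⁻¹ (t, 1) := by
    rw [h, mul_inv_rev, ht.inv, map_mul, Equiv.Perm.mul_apply, signedConj_apply_self cs ht,
      zero_add]
  rw [signedConj_wordProd_inv_apply, signedConj_wordProd_inv_apply,
    List.count_eq_zero_of_not_mem hmem.1, List.count_eq_zero_of_not_mem hmem.2] at sign_eq
  simp at sign_eq

theorem mem_leftInvSeq_iff_isLeftInversion {ω : List B} (hω : cs.IsReduced ω) {t : W} :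
    t ∈ cs.leftInvSeq ω ↔ cs.IsLeftInversion (cs.wordProd ω) t := by
  refine ⟨cs.isLeftInversion_of_mem_leftInvSeq hω, fun hinv => ?_⟩
  obtain ⟨ω', hω', h⟩ := cs.exists_isReduced (t * cs.wordProd ω)
  refine (mem_leftInvSeq_or_mem_leftInvSeq cs hinv.1 h.symm).resolve_right fun hmem => ?_
  have inv_mul := cs.isLeftInversion_of_mem_leftInvSeq hω' hmem
  rw [← h, hinv.1.isLeftInversion_mul_right_iff] at inv_mul
  exact inv_mul hinv

open scoped Classical in
theorem signedConj_inv_apply (w t : W) (e : ZMod 2) :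
    signedConj cs w⁻¹ (t, e) =
      (w⁻¹ * t * w, e + if cs.IsLeftInversion w t then 1 else 0) := by
  obtain ⟨ω, hω, rfl⟩ := cs.exists_isReduced w
  rw [signedConj_wordProd_inv_apply, (hω.nodup_leftInvSeq cs).count]
  simp [mem_leftInvSeq_iff_isLeftInversion cs hω]

theorem isLeftInversion_mul_iff (x z t : W) :
    cs.IsLeftInversion (x * z) t ↔
      Xor (cs.IsLeftInversion x t) (cs.IsLeftInversion z (x⁻¹ * t * x)) := by
  classical
  have sign_mul : signedConj cs (x * z)⁻¹ (t, 0) =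
      signedConj cs z⁻¹ (signedConj cs x⁻¹ (t, 0)) := by
    rw [mul_inv_rev, map_mul, Equiv.Perm.mul_apply]
  simp only [signedConj_inv_apply, Prod.mk.injEq, zero_add] at sign_mul
  replace sign_mul := sign_mul.2
  by_cases hxz : cs.IsLeftInversion (x * z) t <;> by_cases hx : cs.IsLeftInversion x t <;>
    by_cases hz : cs.IsLeftInversion z (x⁻¹ * t * x) <;>
    simp_all [CharTwo.add_self_eq_zero, Xor]

theorem isLeftInversion_simple_iff (i : B) (t : W) :
    cs.IsLeftInversion (cs.simple i) t ↔ t = cs.simple i := by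
  constructor
  · rintro ⟨-, hlt⟩
    rw [length_simple, Nat.lt_one_iff, length_eq_zero_iff] at hlt
    simpa using eq_inv_of_mul_eq_one_left hlt
  · rintro rfl
    simp [IsLeftInversion, isReflection_simple]

end InversionCocycle

section Recoil

theorem simple_mem_coxRecoil_iff {w : W} {i : B} :
    cs.simple i ∈ coxRecoil cs w ↔ cs.IsLeftInversion w (cs.simple i) := by
  simp [coxRecoil, isLeftInversion_simple_iff_isLeftDescent, isLeftDescent_iff]

theorem coxRecoil_eq_coxRecoil_iff {v w : W} :
    coxRecoil cs v = coxRecoil cs w ↔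
      ∀ i, cs.simple i ∈ coxRecoil cs v ↔ cs.simple i ∈ coxRecoil cs w := by
  refine ⟨fun h i => by rw [h], fun h => Set.ext fun s => ?_⟩
  by_cases hs : s ∈ Set.range cs.simple
  · obtain ⟨i, rfl⟩ := hs
    exact h i
  · exact iff_of_false (fun hv => hs hv.1) (fun hw => hs hw.1)

theorem coxRecoil_mul_simple_eq_iff (v : W) (j : B) :
    coxRecoil cs (v * cs.simple j) = coxRecoil cs v ↔
      v * cs.simple j * v⁻¹ ∉ Set.range cs.simple := by
  have conj_iff (i : B) : v⁻¹ * cs.simple i * v = cs.simple j ↔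
      cs.simple i = v * cs.simple j * v⁻¹ := by
    rw [eq_mul_inv_iff_mul_eq, mul_assoc, inv_mul_eq_iff_eq_mul]
  simp only [coxRecoil_eq_coxRecoil_iff, simple_mem_coxRecoil_iff, isLeftInversion_mul_iff,
    isLeftInversion_simple_iff, conj_iff, Set.mem_range, not_exists]
  exact forall_congr' fun i => by grind [Xor]

theorem length_add_length_inv_mul_of_forall_mem_coxRecoil {ω : List B} (hω : cs.IsReduced ω) {w : W}
    (hmem : ∀ i ∈ ω, cs.simple i ∈ coxRecoil cs w) :
    ω.length + cs.length ((cs.wordProd ω)⁻¹ * w) = cs.length w := by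
  induction ω with
  | nil => simp
  | cons i ω ih =>
    have hred : cs.IsReduced ω := hω.drop 1
    rw [List.forall_mem_cons] at hmem
    specialize ih hred hmem.2
    set x := cs.wordProd ω with hx
    have not_inv_x : ¬ cs.IsLeftInversion x (cs.simple i) := by
      have length_cons := hω.eq
      rw [wordProd_cons, List.length_cons, ← hred.eq, ← hx] at length_cons
      exact fun h => h.2.not_ge (by lia)
    have inv_w : cs.IsLeftInversion (x * (x⁻¹ * w)) (cs.simple i) := by
      rw [mul_inv_cancel_left]
      exact (simple_mem_coxRecoil_iff cs).1 hmem.1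
    have inv_conj : cs.IsLeftInversion (x⁻¹ * w) (x⁻¹ * cs.simple i * x) := by
      rw [isLeftInversion_mul_iff] at inv_w
      exact (inv_w.resolve_left fun h => not_inv_x h.1).1
    have length_lt : cs.length ((cs.wordProd (i :: ω))⁻¹ * w) < cs.length (x⁻¹ * w) := by
      simpa [wordProd_cons, ← hx, mul_assoc] using inv_conj.2
    have length_le := cs.length_mul_le (cs.wordProd (i :: ω)) ((cs.wordProd (i :: ω))⁻¹ * w)
    rw [mul_inv_cancel_left, hω.eq, List.length_cons] at length_le
    rw [List.length_cons]
    lia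

/-- One step between elements with the same recoil set: right multiplication by a simple
reflection. -/
def RecoilStep (x y : W) : Prop :=
  coxRecoil cs y = coxRecoil cs x ∧ ∃ j, y = x * cs.simple j

/-- `w` is a local minimum of the length among the elements with its recoil set: no `RecoilStep`
from `w` decreases the length. -/
def IsRecoilMinimal (w : W) : Prop :=
  ∀ j, cs.IsRightDescent w j → coxRecoil cs (w * cs.simple j) ≠ coxRecoil cs w

theorem exists_isReduced_cons_of_wordProd_ne {w : W} (hmin : IsRecoilMinimal cs w)
    {ω : List B} (hω : cs.IsReduced ω) (hmem : ∀ i ∈ ω, cs.simple i ∈ coxRecoil cs w)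
    (hne : cs.wordProd ω ≠ w) :
    ∃ i, cs.simple i ∈ coxRecoil cs w ∧ cs.IsReduced (i :: ω) := by
  have length_add := length_add_length_inv_mul_of_forall_mem_coxRecoil cs hω hmem
  set x := cs.wordProd ω with hx
  obtain ⟨j, hj⟩ := cs.exists_rightDescent_of_ne_one (mt inv_mul_eq_one.1 hne)
  rw [isRightDescent_iff] at hj
  have descent_w : cs.IsRightDescent w j := by
    have length_le := cs.length_mul_le x (x⁻¹ * w * cs.simple j)
    rw [← mul_assoc, mul_inv_cancel_left, hω.eq] at length_le
    unfold IsRightDescent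
    lia
  obtain ⟨i, hi⟩ : w * cs.simple j * w⁻¹ ∈ Set.range cs.simple :=
    not_not.1 fun h => hmin j descent_w ((coxRecoil_mul_simple_eq_iff cs w j).2 h)
  have simple_mul_w : cs.simple i * w = w * cs.simple j := by rw [hi, inv_mul_cancel_right]
  refine ⟨i, ?_, ?_⟩
  · rw [simple_mem_coxRecoil_iff, isLeftInversion_simple_iff_isLeftDescent, IsLeftDescent,
      simple_mul_w]
    exact descent_w
  · have w_eq : cs.simple i * x * (x⁻¹ * w * cs.simple j) = w := by
      simp [mul_assoc, ← simple_mul_w]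
    have length_le := cs.length_mul_le (cs.simple i * x) (x⁻¹ * w * cs.simple j)
    rw [w_eq] at length_le
    have length_cons_le := cs.length_wordProd_le (i :: ω)
    rw [wordProd_cons, List.length_cons, ← hx] at length_cons_le
    rw [CoxeterSystem.IsReduced, wordProd_cons, List.length_cons, ← hx]
    lia

theorem exists_isReduced_wordProd_eq_of_isRecoilMinimal {w : W} (hmin : IsRecoilMinimal cs w) :
    ∃ ω, cs.IsReduced ω ∧ (∀ i ∈ ω, cs.simple i ∈ coxRecoil cs w) ∧ cs.wordProd ω = w := by
  obtain ⟨ω, ⟨hω, hmem⟩, hshort⟩ := exists_minimalFor_of_wellFoundedLT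
    (fun ω => cs.IsReduced ω ∧ ∀ i ∈ ω, cs.simple i ∈ coxRecoil cs w)
    (fun ω => cs.length ((cs.wordProd ω)⁻¹ * w)) ⟨[], by simp [CoxeterSystem.IsReduced]⟩
  refine ⟨ω, hω, hmem, by_contra fun hne => ?_⟩
  obtain ⟨i, hi, hred⟩ := exists_isReduced_cons_of_wordProd_ne cs hmin hω hmem hne
  have hmem_cons : ∀ k ∈ i :: ω, cs.simple k ∈ coxRecoil cs w := List.forall_mem_cons.2 ⟨hi, hmem⟩
  have length_cons := length_add_length_inv_mul_of_forall_mem_coxRecoil cs hred hmem_cons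
  have length_tail := length_add_length_inv_mul_of_forall_mem_coxRecoil cs hω hmem
  have not_shorter := hshort ⟨hred, hmem_cons⟩
  rw [List.length_cons] at length_cons
  lia

theorem exists_isReduced_eqvGen_recoilStep (w : W) :
    ∃ ω, cs.IsReduced ω ∧ (∀ i ∈ ω, cs.simple i ∈ coxRecoil cs w) ∧
      coxRecoil cs (cs.wordProd ω) = coxRecoil cs w ∧
      EqvGen (RecoilStep cs) w (cs.wordProd ω) := by
  induction hn : cs.length w using Nat.strong_induction_on generalizing w with
  | _ n ih =>
    subst hn
    by_cases hmin : IsRecoilMinimal cs w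
    · obtain ⟨ω, hω, hmem, rfl⟩ := exists_isReduced_wordProd_eq_of_isRecoilMinimal cs hmin
      exact ⟨ω, hω, hmem, rfl, .refl _⟩
    · unfold IsRecoilMinimal at hmin
      push Not at hmin
      obtain ⟨j, hj, hrec⟩ := hmin
      obtain ⟨ω, hω, hmem, heq, hgen⟩ := ih _ hj _ rfl
      rw [hrec] at hmem heq
      exact ⟨ω, hω, hmem, heq, .trans _ _ _ (.rel _ _ ⟨hrec, j, rfl⟩) hgen⟩

theorem eqvGen_recoilStep_of_coxRecoil_eq {w w' : W} (h : coxRecoil cs w = coxRecoil cs w') :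
    EqvGen (RecoilStep cs) w w' := by
  obtain ⟨ω, hω, hmem, heq, hgen⟩ := exists_isReduced_eqvGen_recoilStep cs w
  obtain ⟨ω', hω', hmem', heq', hgen'⟩ := exists_isReduced_eqvGen_recoilStep cs w'
  rw [h, ← heq'] at hmem
  rw [← h, ← heq] at hmem'
  have length_add := length_add_length_inv_mul_of_forall_mem_coxRecoil cs hω hmem
  have length_add' := length_add_length_inv_mul_of_forall_mem_coxRecoil cs hω' hmem'
  have wordProd_eq : cs.wordProd ω = cs.wordProd ω' := by
    rw [← inv_mul_eq_one, ← cs.length_eq_zero_iff]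
    rw [hω.eq] at length_add'
    rw [hω'.eq] at length_add
    lia
  exact .trans _ _ _ hgen (wordProd_eq ▸ .symm _ _ hgen')

end Recoil

section Factorization

/-- The factorizations `w = uv` with `R(u) = I` and `R(v) = J`. -/
abbrev RecoilFactorization (I J : Set W) (w : W) : Type _ :=
  {p : W × W // p.1 * p.2 = w ∧ coxRecoil cs p.1 = I ∧ coxRecoil cs p.2 = J}

open scoped Classical in
/-- Absorbs a simple reflection `s` on the right of the product `uv`: into `v` if this keeps
`R(v)`, and otherwise into `u`, as the conjugate `vsv⁻¹`. -/
noncomputable def absorbSimple (j : B) (p : W × W) : W × W :=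
  if coxRecoil cs (p.2 * cs.simple j) = coxRecoil cs p.2 then (p.1, p.2 * cs.simple j)
  else (p.1 * (p.2 * cs.simple j * p.2⁻¹), p.2)

theorem absorbSimple_involutive (j : B) : Function.Involutive (absorbSimple cs j) := by
  rintro ⟨u, v⟩
  by_cases h : coxRecoil cs (v * cs.simple j) = coxRecoil cs v <;>
    simp [absorbSimple, h, mul_assoc]

theorem absorbSimple_fst_mul_snd (j : B) (p : W × W) :
    (absorbSimple cs j p).1 * (absorbSimple cs j p).2 = p.1 * p.2 * cs.simple j := by
  unfold absorbSimple
  split_ifs <;> simp [mul_assoc]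

theorem coxRecoil_absorbSimple_snd (j : B) (p : W × W) :
    coxRecoil cs (absorbSimple cs j p).2 = coxRecoil cs p.2 := by
  unfold absorbSimple
  split_ifs with h
  exacts [h, rfl]

theorem coxRecoil_absorbSimple_fst (j : B) (p : W × W)
    (h : coxRecoil cs (p.1 * p.2 * cs.simple j) = coxRecoil cs (p.1 * p.2)) :
    coxRecoil cs (absorbSimple cs j p).1 = coxRecoil cs p.1 := by
  obtain ⟨u, v⟩ := p
  unfold absorbSimple
  split_ifs with hv
  · rfl
  · rw [coxRecoil_mul_simple_eq_iff, not_not] at hv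
    obtain ⟨i, hi⟩ := hv
    have conj_mul : u * cs.simple i * u⁻¹ = u * v * cs.simple j * (u * v)⁻¹ := by
      rw [hi]
      group
    rw [coxRecoil_mul_simple_eq_iff, ← conj_mul] at h
    rw [← hi, coxRecoil_mul_simple_eq_iff]
    exact h

/-- The bijection between factorizations of `w` and of `ws` given by `absorbSimple`. -/
noncomputable def recoilFactorizationEquivMulSimple (I J : Set W) {w : W} {j : B}
    (h : coxRecoil cs (w * cs.simple j) = coxRecoil cs w) :
    RecoilFactorization cs I J w ≃ RecoilFactorization cs I J (w * cs.simple j) :=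
  (absorbSimple_involutive cs j).toPerm.subtypeEquiv fun p => by
    simp only [Function.Involutive.coe_toPerm, absorbSimple_fst_mul_snd,
      coxRecoil_absorbSimple_snd, mul_left_inj]
    refine and_congr_right fun hp => ?_
    subst hp
    rw [coxRecoil_absorbSimple_fst cs j p h]

theorem nonempty_recoilFactorization_equiv (I J : Set W) {w w' : W}
    (h : coxRecoil cs w = coxRecoil cs w') :
    Nonempty (RecoilFactorization cs I J w ≃ RecoilFactorization cs I J w') := by
  have hgen := eqvGen_recoilStep_of_coxRecoil_eq cs h
  clear h
  induction hgen with
  | rel x y hxy =>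
    obtain ⟨hrec, j, rfl⟩ := hxy
    exact ⟨recoilFactorizationEquivMulSimple cs I J hrec⟩
  | refl x => exact ⟨.refl _⟩
  | symm x y _ ih => exact ih.map Equiv.symm
  | trans x y z _ _ ihxy ihyz => exact ihxy.map2 Equiv.trans ihyz

end Factorization

section GroupAlgebra

variable [Fintype W]

open scoped Classical in
theorem sum_smul_coxY (a : Set W → ℚ) :
    ∑ K : Set W, a K • coxY cs K = ∑ w : W, a (coxRecoil cs w) • MonoidAlgebra.of ℚ W w := by
  simp only [coxY, Finset.smul_sum]
  rw [Finset.sum_comm]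
  simp only [smul_ite, smul_zero, Finset.sum_ite_eq, Finset.mem_univ, if_true]

theorem coxY_mul_coxY (I J : Set W) :
    coxY cs I * coxY cs J =
      ∑ w : W, (Nat.card (RecoilFactorization cs I J w) : ℚ) • MonoidAlgebra.of ℚ W w := by
  classical
  have card_eq_sum (w : W) : (Nat.card (RecoilFactorization cs I J w) : ℚ) =
      ∑ p : W × W, if p.1 * p.2 = w ∧ coxRecoil cs p.1 = I ∧ coxRecoil cs p.2 = J
        then 1 else 0 := by
    rw [Finset.sum_boole, Nat.card_eq_fintype_card, Fintype.card_subtype]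
  calc coxY cs I * coxY cs J
      = ∑ p : W × W, (if coxRecoil cs p.1 = I then MonoidAlgebra.of ℚ W p.1 else 0) *
          (if coxRecoil cs p.2 = J then MonoidAlgebra.of ℚ W p.2 else 0) := by
        rw [coxY, coxY, Fintype.sum_mul_sum, Fintype.sum_prod_type]
    _ = ∑ p : W × W, ∑ w : W,
          if p.1 * p.2 = w ∧ coxRecoil cs p.1 = I ∧ coxRecoil cs p.2 = J
            then MonoidAlgebra.of ℚ W w else 0 := by
        refine Finset.sum_congr rfl fun p _ => ?_
        by_cases hu : coxRecoil cs p.1 = I <;> by_cases hv : coxRecoil cs p.2 = J <;>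
          simp [hu, hv, MonoidAlgebra.single_mul_single]
    _ = ∑ w : W, (Nat.card (RecoilFactorization cs I J w) : ℚ) • MonoidAlgebra.of ℚ W w := by
        rw [Finset.sum_comm]
        simp only [card_eq_sum, Finset.sum_smul, ite_smul, one_smul, zero_smul]

end GroupAlgebra

end SolomonDescent

open SolomonDescent in
open scoped Classical in
theorem statement12_general {B W : Type*} [Group W] {M : CoxeterMatrix B}
    (cs : CoxeterSystem M W) (I J : Set W) :
    (∀ w w' : W, coxRecoil cs w = coxRecoil cs w' →
      Nonempty (RecoilFactorization cs I J w ≃ RecoilFactorization cs I J w')) ∧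
    (∀ [Fintype W], ∃ a : Set W → ℕ,
      coxY cs I * coxY cs J = ∑ K : Set W, (a K : ℚ) • coxY cs K) := by
  refine ⟨fun _ _ => nonempty_recoilFactorization_equiv cs I J, ?_⟩
  intro
  have card_factorsThrough : Function.FactorsThrough
      (fun w => Nat.card (RecoilFactorization cs I J w)) (coxRecoil cs) :=
    fun _ _ h => Nat.card_congr (nonempty_recoilFactorization_equiv cs I J h).some
  refine ⟨Function.extend (coxRecoil cs) (fun w => Nat.card (RecoilFactorization cs I J w)) 0, ?_⟩
  rw [coxY_mul_coxY, sum_smul_coxY]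
  simp only [card_factorsThrough.extend_apply]

open scoped Classical in
/-- In a finite Coxeter group, the number of factorizations `w = uv` with prescribed recoil
sets of the factors depends only on the recoil set of `w`; consequently the product of two
descent-class sums is a nonnegative-integer combination of descent-class sums. -/
theorem statement12 {B W : Type*} [Group W] [Fintype W] {M : CoxeterMatrix B}
    (cs : CoxeterSystem M W) (I J : Set W)
    (hI : I ⊆ Set.range cs.simple) (hJ : J ⊆ Set.range cs.simple) :
    (∀ w w' : W, coxRecoil cs w = coxRecoil cs w' →
      Nat.card {p : W × W // p.1 * p.2 = w ∧ coxRecoil cs p.1 = I ∧ coxRecoil cs p.2 = J} =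
      Nat.card {p : W × W // p.1 * p.2 = w' ∧ coxRecoil cs p.1 = I ∧ coxRecoil cs p.2 = J}) ∧
    (∃ a : Set W → ℕ, coxY cs I * coxY cs J = ∑ K : Set W, (a K : ℚ) • coxY cs K) := by
  obtain ⟨equiv, product⟩ := statement12_general cs I J
  exact ⟨fun w w' h => Nat.card_congr (equiv w w' h).some, product⟩
end

section
/- Let n be a positive integer, let σ ∈ S_n, let i, j ∈ {1,…,n−1} with |i − j| ≥ 2, and suppose that σ, σs_i, σs_is_j and σs_j all have the same recoil set. Let σ = πρ be a factorization with R(π) = I and R(ρ) = J. Then the unique lift (in the sense that at each step the unique factorization of Proposition on recoils is applied) of the closed path σ — σs_i — σs_is_j — σs_j — σ starting at (π,ρ) is again a closed path, i.e. it returns to (π,ρ). Concretely: either |ρ(i) − ρ(i+1)| ≥ 2 and |ρ(j) − ρ(j+1)| ≥ 2 and the lift is (π,ρ) — (π,ρs_i) — (π,ρs_is_j) — (π,ρs_j) — (π,ρ) after identifying factorizations, or the analogous closed lifts obtained by moving one or both steps to the π-coordinate occur; in every case the lift ends at the starting pair (π,ρ). -/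
/-- One step of the lift of an edge `σ — σ·τ` (with `τ` a simple transposition) through the
unique factorization of the Proposition on recoils: the pair `q` is a factorization of
`(p.1 * p.2) · τ` obtained from the factorization `p` by moving one coordinate by a simple
transposition while preserving its recoil set and keeping the other coordinate fixed. -/
def LiftStep {n : ℕ} (τ : Equiv.Perm (Fin n))
    (p q : Equiv.Perm (Fin n) × Equiv.Perm (Fin n)) : Prop :=
  q.1 * q.2 = p.1 * p.2 * τ ∧
    ((q.1 = p.1 ∧ IsSimpleTransposition (p.2⁻¹ * q.2) ∧ recoilSet q.2 = recoilSet p.2) ∨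
     (q.2 = p.2 ∧ IsSimpleTransposition (p.1⁻¹ * q.1) ∧ recoilSet q.1 = recoilSet p.1))

/-!
Write `t = ρτρ⁻¹`, so that `πρτ = πtρ`: a lift of the edge `σ — στ` from `(π, ρ)` either absorbs `t`
into `π` on the right or into `ρ` on the left. Left multiplication by a simple transposition changes
the recoil set, so the first happens exactly when `t` is simple and the lift is a function of
`(π, ρ)`. If `κ` commutes with `τ`, lifting along `κ` does not change `t`. Hence the lifts along
commuting transpositions commute, the lift along a transposition is an involution, and the square
closes.
-/

section Group

variable {G : Type*} [Group G] (S : G → Prop) {s t κ τ : G}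

open Classical in
/-- Passes from a factorization `(π, ρ)` of `πρ` to one of `πtρ`, absorbing `t` into `π` on the
right when it satisfies `S`, and into `ρ` on the left otherwise. -/
noncomputable def absorb (t : G) (p : G × G) : G × G :=
  if S t then (p.1 * t, p.2) else (p.1, t * p.2)

theorem absorb_comm (h : Commute s t) (p : G × G) :
    absorb S s (absorb S t p) = absorb S t (absorb S s p) := by
  by_cases hs : S s <;> by_cases ht : S t <;> simp [absorb, hs, ht, mul_assoc, h.eq, h.left_comm]

theorem absorb_absorb_self (h : t * t = 1) (p : G × G) : absorb S t (absorb S t p) = p := by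
  by_cases ht : S t
  · simp [absorb, ht, mul_assoc, h]
  · simp [absorb, ht, ← mul_assoc, h]

/-- The lift of the edge `πρ — πρτ` to factorizations, starting from `p = (π, ρ)`: as
`πρτ = π(ρτρ⁻¹)ρ`, the conjugate `ρτρ⁻¹` is absorbed. For recoil classes `S` singles out the simple
transpositions. -/
noncomputable def factorizationLift (τ : G) (p : G × G) : G × G :=
  absorb S (p.2 * τ * p.2⁻¹) p

theorem conj_snd_factorizationLift (h : Commute κ τ) (p : G × G) :
    (factorizationLift S κ p).2 * τ * (factorizationLift S κ p).2⁻¹ = p.2 * τ * p.2⁻¹ := by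
  by_cases hS : S (p.2 * κ * p.2⁻¹)
  · simp [factorizationLift, absorb, hS]
  · have hsnd : (factorizationLift S κ p).2 = p.2 * κ := by simp [factorizationLift, absorb, hS]
    calc (factorizationLift S κ p).2 * τ * (factorizationLift S κ p).2⁻¹
        = p.2 * (κ * τ * κ⁻¹) * p.2⁻¹ := by rw [hsnd]; group
      _ = p.2 * τ * p.2⁻¹ := by rw [h.mul_inv_cancel]

theorem factorizationLift_factorizationLift (h : Commute κ τ) (p : G × G) :
    factorizationLift S τ (factorizationLift S κ p) =
      absorb S (p.2 * τ * p.2⁻¹) (absorb S (p.2 * κ * p.2⁻¹) p) := by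
  rw [factorizationLift, conj_snd_factorizationLift S h, factorizationLift]

theorem factorizationLift_comm (h : Commute κ τ) (p : G × G) :
    factorizationLift S κ (factorizationLift S τ p) =
      factorizationLift S τ (factorizationLift S κ p) := by
  rw [factorizationLift_factorizationLift S h, factorizationLift_factorizationLift S h.symm,
    absorb_comm S ((Commute.conj_iff p.2).2 h)]

theorem factorizationLift_factorizationLift_self (h : τ * τ = 1) (p : G × G) :
    factorizationLift S τ (factorizationLift S τ p) = p := by
  have hconj : p.2 * τ * p.2⁻¹ * (p.2 * τ * p.2⁻¹) = 1 := by
    rw [conj_mul, h, mul_one, mul_inv_cancel]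
  rw [factorizationLift_factorizationLift S (Commute.refl τ), absorb_absorb_self S hconj]

end Group

section Recoil

variable {n : ℕ} {τ : Equiv.Perm (Fin n)} {p q : Equiv.Perm (Fin n) × Equiv.Perm (Fin n)}

theorem IsSimpleTransposition.mul_self (hτ : IsSimpleTransposition τ) : τ * τ = 1 := by
  obtain ⟨k, hk, rfl⟩ := hτ
  exact Equiv.swap_mul_self _ _

theorem IsSimpleTransposition.recoilSet_mul_ne (hτ : IsSimpleTransposition τ)
    (ρ : Equiv.Perm (Fin n)) : recoilSet (τ * ρ) ≠ recoilSet ρ := by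
  obtain ⟨k, hk, rfl⟩ := hτ
  intro hrecoil
  have hlt_iff : ρ⁻¹ ⟨k, by omega⟩ < ρ⁻¹ ⟨k + 1, hk⟩ ↔ ρ⁻¹ ⟨k + 1, hk⟩ < ρ⁻¹ ⟨k, by omega⟩ := by
    simpa [recoilSet, hk] using Finset.ext_iff.1 hrecoil ⟨k, by omega⟩
  have hne : ρ⁻¹ ⟨k, by omega⟩ ≠ ρ⁻¹ ⟨k + 1, hk⟩ := by simp
  exact hne.lt_or_gt.elim (fun h => h.asymm (hlt_iff.1 h)) (fun h => h.asymm (hlt_iff.2 h))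

theorem LiftStep.eq_factorizationLift (h : LiftStep τ p q) :
    q = factorizationLift IsSimpleTransposition τ p := by
  obtain ⟨π, ρ⟩ := p
  obtain ⟨π', ρ'⟩ := q
  obtain ⟨hfac, ⟨rfl, -, hrecoil⟩ | ⟨rfl, hsimple, -⟩⟩ := h
  · obtain rfl : ρ' = ρ * τ := by simpa [mul_assoc] using hfac
    have hnot : ¬ IsSimpleTransposition (ρ * τ * ρ⁻¹) := fun hsimple =>
      hsimple.recoilSet_mul_ne ρ (by rwa [inv_mul_cancel_right])
    simp [factorizationLift, absorb, hnot]
  · obtain rfl : π' = π * (ρ' * τ * ρ'⁻¹) := by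
      simpa [mul_assoc] using eq_mul_inv_of_mul_eq hfac
    have hconj : IsSimpleTransposition (ρ' * τ * ρ'⁻¹) := by rwa [inv_mul_cancel_left] at hsimple
    simp [factorizationLift, absorb, hconj]

theorem LiftStep.mul_self (h : LiftStep τ p q) : τ * τ = 1 := by
  obtain ⟨hfac, ⟨hfst, hsimple, -⟩ | ⟨hsnd, hsimple, -⟩⟩ := h
  · have hτ : p.2⁻¹ * q.2 = τ := by
      rw [hfst, mul_assoc] at hfac
      rw [mul_left_cancel hfac, inv_mul_cancel_left]
    exact hτ ▸ hsimple.mul_self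
  · have hconj : p.1⁻¹ * q.1 = p.2 * τ * p.2⁻¹ := by
      rw [hsnd] at hfac
      rw [eq_mul_inv_of_mul_eq hfac]
      group
    have hsq := hsimple.mul_self
    rw [hconj, conj_mul] at hsq
    simpa using hsq

theorem commute_swap_succ_of_two_le_abs_sub {i j : ℕ} (hi : i + 1 < n) (hj : j + 1 < n)
    (hij : 2 ≤ |(i : ℤ) - (j : ℤ)|) :
    Commute (Equiv.swap (⟨i, Nat.lt_of_succ_lt hi⟩ : Fin n) ⟨i + 1, hi⟩)
      (Equiv.swap ⟨j, Nat.lt_of_succ_lt hj⟩ ⟨j + 1, hj⟩) := by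
  refine (Equiv.Perm.disjoint_swap_swap ?_).commute
  have hsep : i + 2 ≤ j ∨ j + 2 ≤ i := by
    rcases le_abs.1 hij with h | h <;> omega
  simp only [List.nodup_cons, List.mem_cons, List.not_mem_nil, Fin.mk.injEq]
  grind

end Recoil

theorem statement17_general {n : ℕ} {κ τ : Equiv.Perm (Fin n)} (hcomm : Commute κ τ)
    {p p₁ p₂ p₃ p₄ : Equiv.Perm (Fin n) × Equiv.Perm (Fin n)}
    (h₁ : LiftStep κ p p₁) (h₂ : LiftStep τ p₁ p₂) (h₃ : LiftStep κ p₂ p₃)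
    (h₄ : LiftStep τ p₃ p₄) : p₄ = p := by
  let L := factorizationLift (IsSimpleTransposition (n := n))
  calc p₄ = L τ (L κ (L τ (L κ p))) := by
        rw [h₄.eq_factorizationLift, h₃.eq_factorizationLift, h₂.eq_factorizationLift,
          h₁.eq_factorizationLift]
    _ = L τ (L τ (L κ (L κ p))) := congrArg (L τ) (factorizationLift_comm _ hcomm _)
    _ = L κ (L κ p) := factorizationLift_factorizationLift_self _ h₂.mul_self _
    _ = p := factorizationLift_factorizationLift_self _ h₁.mul_self _

/-- Lifting a commuting-relation loop `σ — σs_i — σs_is_j — σs_j — σ` (with `|i−j| ≥ 2`,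
all four vertices in the same recoil class) starting at a factorization `(π,ρ)` of `σ`
returns to `(π,ρ)`. -/
theorem statement17 (n : ℕ) (hn : 0 < n) (σ π ρ : Equiv.Perm (Fin n))
    (I J : Finset (Fin n)) (i j : ℕ) (hi : i + 1 < n) (hj : j + 1 < n)
    (hij : 2 ≤ |(i : ℤ) - (j : ℤ)|)
    (si : Equiv.Perm (Fin n)) (sj : Equiv.Perm (Fin n))
    (hsi : si = Equiv.swap ⟨i, by omega⟩ ⟨i + 1, hi⟩)
    (hsj : sj = Equiv.swap ⟨j, by omega⟩ ⟨j + 1, hj⟩)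
    (h1 : recoilSet (σ * si) = recoilSet σ)
    (h2 : recoilSet (σ * si * sj) = recoilSet σ)
    (h3 : recoilSet (σ * sj) = recoilSet σ)
    (hfac : σ = π * ρ) (hπ : recoilSet π = I) (hρ : recoilSet ρ = J) :
    ∀ p₁ p₂ p₃ p₄ : Equiv.Perm (Fin n) × Equiv.Perm (Fin n),
      LiftStep si (π, ρ) p₁ → LiftStep sj p₁ p₂ → LiftStep si p₂ p₃ →
      LiftStep sj p₃ p₄ → p₄ = (π, ρ) := by
  intro p₁ p₂ p₃ p₄ h₁ h₂ h₃ h₄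
  subst hsi hsj
  exact statement17_general (commute_swap_succ_of_two_le_abs_sub hi hj hij) h₁ h₂ h₃ h₄
end
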